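/- (Theorem 3.4, Strong maximum principle in the critical case, heat-operator version) Let Ω ⊆ ℝ^N be a connected open set, T > 0, and let λ₀ : Ω × (0,T) → ℝ satisfy 0 < m ≤ λ₀ ≤ M. Let u : Ω × (0,T) → ℝ be a nonnegative continuous function such that at every point of Ω × (0,T) the spatial Hessian and the time derivative of u exist and Δu(x,t) − ∂_t u(x,t) = λ₀(x,t) u(x,t), where Δu denotes the trace of the spatial Hessian. If u(x₀,t₀) = 0 for some (x₀,t₀) ∈ Ω × (0,T), then u(x,t) = 0 for every x ∈ Ω and every t ∈ (0, t₀]. -/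

import Mathlib

noncomputable section

open Set Metric MeasureTheory

/-- Euclidean space `ℝ^N`. -/
abbrev Euc (N : ℕ) := EuclideanSpace ℝ (Fin N)

/-- `s₊^q`: equals `(max s 0)^q` if `s > 0` and `0` otherwise. -/
def plusPowQ (q s : ℝ) : ℝ := if 0 < s then (max s 0) ^ q else 0

/-- The spatial gradient `∇u(x,t)`. -/
def spatialGrad (N : ℕ) (u : Euc N × ℝ → ℝ) (z : Euc N × ℝ) : Euc N :=
  gradient (fun y => u (y, z.2)) z.1

/-- The vector field `V(y,t) = ‖∇u(y,t)‖^(p-2) ∇u(y,t)`. -/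
def pVF (N : ℕ) (p : ℝ) (u : Euc N × ℝ → ℝ) (z : Euc N × ℝ) : Euc N :=
  ‖spatialGrad N u z‖ ^ (p - 2) • spatialGrad N u z

/-- The `p`-Laplacian `Δ_p u` realized as `trace (D_x V)` with `V = ‖∇u‖^(p-2)∇u`. -/
def pLap (N : ℕ) (p : ℝ) (u : Euc N × ℝ → ℝ) (z : Euc N × ℝ) : ℝ :=
  LinearMap.trace ℝ (Euc N) (fderiv ℝ (fun y => pVF N p u (y, z.2)) z.1).toLinearMap

/-- The time derivative `∂ₜ u`. -/
def timeDeriv (N : ℕ) (u : Euc N × ℝ → ℝ) (z : Euc N × ℝ) : ℝ :=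
  deriv (fun t => u (z.1, t)) z.2

/-- `u` is a classical solution of the dead-core equation `Δ_p u - ∂_t u = λ₀ u₊^q` on `D`:
`u` is continuous on `D` and at every point of `D` the spatial gradient and time derivative
exist, `V = ‖∇u‖^(p-2)∇u` is spatially differentiable, and the PDE holds. -/
def IsDCSol (N : ℕ) (p q : ℝ) (lam u : Euc N × ℝ → ℝ) (D : Set (Euc N × ℝ)) : Prop :=
  ContinuousOn u D ∧
  ∀ z ∈ D,
    DifferentiableAt ℝ (fun y => u (y, z.2)) z.1 ∧
    DifferentiableAt ℝ (fun t => u (z.1, t)) z.2 ∧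
    DifferentiableAt ℝ (fun y => pVF N p u (y, z.2)) z.1 ∧
    pLap N p u z - timeDeriv N u z = lam z * plusPowQ q (u z)

/-- The intrinsic scaling exponent `θ = p(1-q)/(p-1-q)`. -/
def thetaV (p q : ℝ) : ℝ := p * (1 - q) / (p - 1 - q)

/-- The intrinsic cylinder `Q_r(x₀,t₀) = B_r(x₀) × (t₀ - r^θ, t₀ + r^θ)`. -/
def cylQ (N : ℕ) (θ r : ℝ) (z0 : Euc N × ℝ) : Set (Euc N × ℝ) :=
  (ball z0.1 r) ×ˢ (Ioo (z0.2 - r ^ θ) (z0.2 + r ^ θ))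

/-- The lower cylinder `Q_r⁻(x₀,t₀) = B_r(x₀) × (t₀ - r^θ, t₀]`. -/
def cylQm (N : ℕ) (θ r : ℝ) (z0 : Euc N × ℝ) : Set (Euc N × ℝ) :=
  (ball z0.1 r) ×ˢ (Ioc (z0.2 - r ^ θ) z0.2)

/-- The upper cylinder `Q_r⁺(x₀,t₀) = B_r(x₀) × [t₀, t₀ + r^θ)`. -/
def cylQp (N : ℕ) (θ r : ℝ) (z0 : Euc N × ℝ) : Set (Euc N × ℝ) :=
  (ball z0.1 r) ×ˢ (Ico z0.2 (z0.2 + r ^ θ))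

/-- The parabolic boundary of `Q_r⁻(x₀,t₀)`:
`(closure(B_r) × {t₀ - r^θ}) ∪ (∂B_r × (t₀ - r^θ, t₀])`. -/
def parBdryQm (N : ℕ) (θ r : ℝ) (z0 : Euc N × ℝ) : Set (Euc N × ℝ) :=
  ((closedBall z0.1 r) ×ˢ ({z0.2 - r ^ θ} : Set ℝ)) ∪
    ((sphere z0.1 r) ×ˢ (Ioc (z0.2 - r ^ θ) z0.2))

/-- The class `𝔍 = 𝔍_p(λ₀,q)(Q₁)`: classical solutions `u` on `Q₁` (for some `λ₀` with
`m ≤ λ₀ ≤ M`) with `0 ≤ u ≤ 1`, `∂ₜ u ≥ 0` on `Q₁` and `u(0,0) = 0`. -/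
def memJ (N : ℕ) (p q m M : ℝ) (u : Euc N × ℝ → ℝ) : Prop :=
  ∃ lam : Euc N × ℝ → ℝ,
    (∀ z ∈ cylQ N (thetaV p q) 1 (0, 0), m ≤ lam z ∧ lam z ≤ M) ∧
    IsDCSol N p q lam u (cylQ N (thetaV p q) 1 (0, 0)) ∧
    (∀ z ∈ cylQ N (thetaV p q) 1 (0, 0), 0 ≤ u z ∧ u z ≤ 1) ∧
    (∀ z ∈ cylQ N (thetaV p q) 1 (0, 0), 0 ≤ timeDeriv N u z) ∧
    u (0, 0) = 0

/-- `S_r[u] = sup over Q_r⁻ of u` (cylinders centered at the origin). -/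
def Sr (N : ℕ) (p q r : ℝ) (u : Euc N × ℝ → ℝ) : ℝ :=
  sSup (u '' cylQm N (thetaV p q) r (0, 0))

/-
If `u (y, s) > 0`, compare `u` with the barrier `ε exp (-K (t - s)) h²` on the expanding paraboloid
`h = δ² + c (t - s) - ‖x - y‖² ≥ 0`. For `K` large the barrier is a strict subsolution, and the
difference cannot have a negative minimum, because there `Δ ≥ 0` and `∂ₜ ≤ 0`. As `c` is arbitrary,
positivity at `y` spreads to a whole ball within any positive amount of time, and chaining balls
through the connected set `Ω` carries it to every point at every later time. Hence a zero at
`(x₀, t₀)` excludes positive values at earlier times, and by continuity also at time `t₀` itself.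
-/

open Filter Topology Laplacian

section TwiceDifferentiable

variable {E : Type*} [NormedAddCommGroup E] [NormedSpace ℝ E] {f g : E → ℝ} {x : E}

/-- Twice differentiability at a point, the hypothesis of the second-derivative test: `f` is
differentiable near `x` and its derivative is differentiable at `x`. Unlike `ContDiffAt ℝ 2`, it
does not require the second derivative to exist at other points. -/
def TwiceDifferentiableAt (f : E → ℝ) (x : E) : Prop :=
  (∀ᶠ y in 𝓝 x, DifferentiableAt ℝ f y) ∧ DifferentiableAt ℝ (fderiv ℝ f) x

lemma twiceDifferentiableAt_of_contDiffAt (hf : ContDiffAt ℝ 2 f x) :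
    TwiceDifferentiableAt f x :=
  ⟨(hf.eventually (by simp)).mono fun _ h ↦ h.differentiableAt two_ne_zero,
    (hf.fderiv_right (m := 1) (by norm_num)).differentiableAt one_ne_zero⟩

namespace TwiceDifferentiableAt

lemma fderiv_sub_eventuallyEq (hf : TwiceDifferentiableAt f x) (hg : TwiceDifferentiableAt g x) :
    fderiv ℝ (f - g) =ᶠ[𝓝 x] fderiv ℝ f - fderiv ℝ g := by
  filter_upwards [hf.1, hg.1] with y hfy hgy using fderiv_sub hfy hgy

lemma sub (hf : TwiceDifferentiableAt f x) (hg : TwiceDifferentiableAt g x) :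
    TwiceDifferentiableAt (f - g) x :=
  ⟨by filter_upwards [hf.1, hg.1] with y hfy hgy using hfy.sub hgy,
    (hf.2.sub hg.2).congr_of_eventuallyEq (hf.fderiv_sub_eventuallyEq hg)⟩

lemma fderiv_fderiv_sub (hf : TwiceDifferentiableAt f x) (hg : TwiceDifferentiableAt g x) :
    fderiv ℝ (fderiv ℝ (f - g)) x = fderiv ℝ (fderiv ℝ f) x - fderiv ℝ (fderiv ℝ g) x := by
  rw [(hf.fderiv_sub_eventuallyEq hg).fderiv_eq, fderiv_sub hf.2 hg.2]

lemma deriv_deriv_comp_add_smul (hf : TwiceDifferentiableAt f x) (v : E) :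
    deriv (deriv fun h : ℝ ↦ f (x + h • v)) 0 = fderiv ℝ (fderiv ℝ f) x v v := by
  have hline (h : ℝ) : HasDerivAt (fun h : ℝ ↦ x + h • v) v h := by
    simpa using ((hasDerivAt_id h).smul_const v).const_add x
  have hx : x + (0 : ℝ) • v = x := by simp
  have hnear : ∀ᶠ h in 𝓝 (0 : ℝ), DifferentiableAt ℝ f (x + h • v) :=
    (hline 0).continuousAt.eventually (by simpa only [hx] using hf.1)
  have hderiv : (deriv fun h : ℝ ↦ f (x + h • v)) =ᶠ[𝓝 0] fun h ↦ fderiv ℝ f (x + h • v) v :=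
    hnear.mono fun h hh ↦ (hh.hasFDerivAt.comp_hasDerivAt h (hline h)).deriv
  have hf2 : HasFDerivAt (fderiv ℝ f) (fderiv ℝ (fderiv ℝ f) x) (x + (0 : ℝ) • v) := by
    simpa only [hx] using hf.2.hasFDerivAt
  have hderiv2 : HasDerivAt (fun h : ℝ ↦ fderiv ℝ f (x + h • v) v)
      (fderiv ℝ (fderiv ℝ f) x v v) 0 :=
    (ContinuousLinearMap.apply ℝ ℝ v).hasFDerivAt.comp_hasDerivAt 0
      (hf2.comp_hasDerivAt 0 (hline 0))
  rw [hderiv.deriv_eq, hderiv2.deriv]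

end TwiceDifferentiableAt

end TwiceDifferentiable

section SecondDerivativeTest

lemma deriv_nonpos_of_isLocalMinOn_Iic {f : ℝ → ℝ} {a : ℝ} (h : IsLocalMinOn f (Iic a) a) :
    deriv f a ≤ 0 := by
  by_cases hf : DifferentiableAt ℝ f a
  · have hcone : (-1 : ℝ) ∈ posTangentConeAt (Iic a) a :=
      mem_posTangentConeAt_of_segment_subset <|
        (convex_Iic a).segment_subset self_mem_Iic (by simp)
    simpa using h.hasFDerivWithinAt_nonneg hf.hasDerivAt.hasFDerivAt.hasFDerivWithinAt hcone
  · exact (deriv_zero_of_not_differentiableAt hf).le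

lemma deriv_deriv_nonneg_of_isLocalMin {f : ℝ → ℝ} {a : ℝ} (hmin : IsLocalMin f a)
    (hf : ContinuousAt f a) : 0 ≤ deriv (deriv f) a := by
  by_contra! hneg
  have hmax : IsLocalMax f a := isLocalMax_of_deriv_deriv_neg hneg hmin.deriv_eq_zero hf
  have hconst : f =ᶠ[𝓝 a] fun _ ↦ f a := by
    filter_upwards [hmin, hmax] with x hx hx' using le_antisymm hx' hx
  have hzero : deriv (deriv f) a = 0 := by simp [hconst.deriv.deriv_eq]
  exact hneg.ne hzero

lemma fderiv_fderiv_nonneg_of_isLocalMin {E : Type*} [NormedAddCommGroup E] [NormedSpace ℝ E]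
    {f : E → ℝ} {x : E} (hmin : IsLocalMin f x) (hf : TwiceDifferentiableAt f x) (v : E) :
    0 ≤ fderiv ℝ (fderiv ℝ f) x v v := by
  have hline : Tendsto (fun h : ℝ ↦ x + h • v) (𝓝 0) (𝓝 x) :=
    Continuous.tendsto' (by fun_prop) _ _ (by simp)
  rw [← hf.deriv_deriv_comp_add_smul]
  apply deriv_deriv_nonneg_of_isLocalMin
  · filter_upwards [hline.eventually hmin] with h hh using by simpa using hh
  · exact ContinuousAt.comp_of_eq hf.1.self_of_nhds.continuousAt (by fun_prop) (by simp)

end SecondDerivativeTest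

lemma deriv_deriv_sq_quadratic (p q : ℝ) :
    deriv (deriv fun h ↦ (p - 2 * q * h - h ^ 2) ^ 2) 0 = 8 * q ^ 2 - 4 * p := by
  have hquad (h : ℝ) : HasDerivAt (fun h ↦ p - 2 * q * h - h ^ 2) (-(2 * q) - 2 * h) h := by
    simpa using (((hasDerivAt_id h).const_mul (2 * q)).const_sub p).fun_sub (hasDerivAt_pow 2 h)
  have hlin : HasDerivAt (fun h : ℝ ↦ -(2 * q) - 2 * h) (-2) 0 := by
    simpa using ((hasDerivAt_id (0 : ℝ)).const_mul 2).const_sub (-(2 * q))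
  have hderiv : deriv (fun h ↦ (p - 2 * q * h - h ^ 2) ^ 2) =
      fun h ↦ 2 * (p - 2 * q * h - h ^ 2) * (-(2 * q) - 2 * h) :=
    funext fun h ↦ by simpa using ((hquad h).fun_pow 2).deriv
  rw [hderiv, (((hquad 0).const_mul 2).fun_mul hlin).deriv]
  ring

section Laplacian

variable {E : Type*} [NormedAddCommGroup E] [InnerProductSpace ℝ E] [FiniteDimensional ℝ E]
  {f g : E → ℝ} {x : E}

lemma laplacian_eq_sum_fderiv_fderiv {ι : Type*} [Fintype ι] (b : OrthonormalBasis ι ℝ E) :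
    Δ f x = ∑ i, fderiv ℝ (fderiv ℝ f) x (b i) (b i) := by
  simp [InnerProductSpace.laplacian_eq_iteratedFDeriv_orthonormalBasis f b,
    iteratedFDeriv_two_apply]

lemma laplacian_sub_of_twiceDifferentiableAt (hf : TwiceDifferentiableAt f x)
    (hg : TwiceDifferentiableAt g x) : Δ (f - g) x = Δ f x - Δ g x := by
  simp [laplacian_eq_sum_fderiv_fderiv (stdOrthonormalBasis ℝ E), hf.fderiv_fderiv_sub hg]

lemma laplacian_nonneg_of_isLocalMin (hmin : IsLocalMin f x) (hf : TwiceDifferentiableAt f x) :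
    0 ≤ Δ f x := by
  rw [laplacian_eq_sum_fderiv_fderiv (stdOrthonormalBasis ℝ E)]
  exact Finset.sum_nonneg fun i _ ↦ fderiv_fderiv_nonneg_of_isLocalMin hmin hf _

lemma trace_fderiv_gradient :
    LinearMap.trace ℝ E (fderiv ℝ (gradient f) x).toLinearMap = Δ f x := by
  have hHess (v : E) : inner ℝ v (fderiv ℝ (gradient f) x v) = fderiv ℝ (fderiv ℝ f) x v v := by
    rw [← toDual_comp_gradient, LinearIsometryEquiv.comp_fderiv]
    exact real_inner_comm _ _
  simp [LinearMap.trace_eq_sum_inner _ (stdOrthonormalBasis ℝ E), hHess,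
    laplacian_eq_sum_fderiv_fderiv (stdOrthonormalBasis ℝ E)]

lemma differentiableAt_fderiv_of_gradient (hf : DifferentiableAt ℝ (gradient f) x) :
    DifferentiableAt ℝ (fderiv ℝ f) x := by
  rw [← toDual_comp_gradient]
  exact (InnerProductSpace.toDual ℝ E).differentiableAt.comp x hf

lemma laplacian_sub_norm_sq_sq (a : ℝ) (y x : E) :
    Δ (fun x ↦ (a - ‖x - y‖ ^ 2) ^ 2) x =
      8 * ‖x - y‖ ^ 2 - 4 * Module.finrank ℝ E * (a - ‖x - y‖ ^ 2) := by
  set b := stdOrthonormalBasis ℝ E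
  have hf : TwiceDifferentiableAt (fun x ↦ (a - ‖x - y‖ ^ 2) ^ 2) x :=
    twiceDifferentiableAt_of_contDiffAt
      ((contDiff_const.sub ((contDiff_id.sub contDiff_const).norm_sq ℝ)).pow 2).contDiffAt
  have hdir (i) : fderiv ℝ (fderiv ℝ fun x ↦ (a - ‖x - y‖ ^ 2) ^ 2) x (b i) (b i) =
      8 * inner ℝ (x - y) (b i) ^ 2 - 4 * (a - ‖x - y‖ ^ 2) := by
    have hline : (fun h : ℝ ↦ (a - ‖x + h • b i - y‖ ^ 2) ^ 2) =
        fun h ↦ (a - ‖x - y‖ ^ 2 - 2 * inner ℝ (x - y) (b i) * h - h ^ 2) ^ 2 := by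
      funext h
      rw [add_sub_right_comm, norm_add_sq_real, inner_smul_right, norm_smul, b.norm_eq_one,
        mul_one, Real.norm_eq_abs, sq_abs]
      ring
    rw [← hf.deriv_deriv_comp_add_smul, hline, deriv_deriv_sq_quadratic]
  rw [laplacian_eq_sum_fderiv_fderiv b]
  simp only [hdir, Finset.sum_sub_distrib, ← Finset.mul_sum, b.sum_sq_inner_left,
    Finset.sum_const, Finset.card_univ, Fintype.card_fin, nsmul_eq_mul]
  ring

end Laplacian

section ParabolicInterior

variable {E : Type*} [TopologicalSpace E] {D D' : Set (E × ℝ)}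

/-- The parabolic interior of a space-time set: the points that can be perturbed in space, and
backwards in time, without leaving the set. The set may end at the time of the point, so that the
final time slice of a cylinder over an open base belongs to it. -/
def parabolicInterior (D : Set (E × ℝ)) : Set (E × ℝ) :=
  {z | (∀ᶠ x in 𝓝 z.1, (x, z.2) ∈ D) ∧ ∀ᶠ t in 𝓝[≤] z.2, (z.1, t) ∈ D}

lemma parabolicInterior_subset : parabolicInterior D ⊆ D :=
  fun _ hz ↦ hz.1.self_of_nhds

lemma parabolicInterior_mono (hD : D' ⊆ D) :
    parabolicInterior D' ⊆ parabolicInterior D :=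
  fun _ hz ↦ ⟨hz.1.mono fun _ hx ↦ hD hx, hz.2.mono fun _ ht ↦ hD ht⟩

end ParabolicInterior

section HeatOperator

variable {E : Type*} [NormedAddCommGroup E] [InnerProductSpace ℝ E] [FiniteDimensional ℝ E]
  {u v : E × ℝ → ℝ} {z : E × ℝ} {D : Set (E × ℝ)}

/-- The heat operator `Δu - ∂ₜu`, the Laplacian being taken in the space variable `z.1`. -/
def heatOp (u : E × ℝ → ℝ) (z : E × ℝ) : ℝ :=
  Δ (fun x ↦ u (x, z.2)) z.1 - deriv (fun t ↦ u (z.1, t)) z.2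

/-- The pointwise regularity under which the derivatives in `heatOp u z` are genuine: two in space
and one in time. -/
structure HeatRegularAt (u : E × ℝ → ℝ) (z : E × ℝ) : Prop where
  space : TwiceDifferentiableAt (fun x ↦ u (x, z.2)) z.1
  time : DifferentiableAt ℝ (fun t ↦ u (z.1, t)) z.2

lemma heatOp_sub (hu : HeatRegularAt u z) (hv : HeatRegularAt v z) :
    heatOp (u - v) z = heatOp u z - heatOp v z := by
  have hspace : Δ (fun x ↦ (u - v) (x, z.2)) z.1 =
      Δ (fun x ↦ u (x, z.2)) z.1 - Δ (fun x ↦ v (x, z.2)) z.1 :=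
    laplacian_sub_of_twiceDifferentiableAt hu.space hv.space
  have htime : deriv (fun t ↦ (u - v) (z.1, t)) z.2 =
      deriv (fun t ↦ u (z.1, t)) z.2 - deriv (fun t ↦ v (z.1, t)) z.2 :=
    deriv_fun_sub hu.time hv.time
  rw [heatOp, hspace, htime, heatOp, heatOp]
  ring

lemma heatOp_nonneg_of_isMinOn (hz : z ∈ parabolicInterior D) (hmin : IsMinOn v D z)
    (hv : TwiceDifferentiableAt (fun x ↦ v (x, z.2)) z.1) : 0 ≤ heatOp v z := by
  have hspace : IsLocalMin (fun x ↦ v (x, z.2)) z.1 := hz.1.mono fun _ hx ↦ hmin hx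
  have htime : IsLocalMinOn (fun t ↦ v (z.1, t)) (Iic z.2) z.2 := hz.2.mono fun _ ht ↦ hmin ht
  exact sub_nonneg.2 <| (deriv_nonpos_of_isLocalMinOn_Iic htime).trans
    (laplacian_nonneg_of_isLocalMin hspace hv)

lemma nonneg_of_heatOp_neg_of_neg (hD : IsCompact D) (hcont : ContinuousOn v D)
    (hint : ∀ z ∈ D, v z < 0 → z ∈ parabolicInterior D)
    (hreg : ∀ z ∈ D, v z < 0 → TwiceDifferentiableAt (fun x ↦ v (x, z.2)) z.1)
    (hneg : ∀ z ∈ D, v z < 0 → heatOp v z < 0) : ∀ z ∈ D, 0 ≤ v z := by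
  intro z hz
  obtain ⟨w, hw, hmin⟩ := hD.exists_isMinOn ⟨z, hz⟩ hcont
  by_contra! hvz
  have hvw : v w < 0 := (hmin hz).trans_lt hvz
  exact (hneg w hw hvw).not_ge <|
    heatOp_nonneg_of_isMinOn (hint w hw hvw) hmin (hreg w hw hvw)

/-- `u` is a continuous nonnegative supersolution of `Δu - ∂ₜu = λu` on `D`. Regularity and the
differential inequality are imposed on the parabolic interior only, so that the notion makes sense
for compact `D`. -/
structure IsNonnegSupersolutionOn (lam u : E × ℝ → ℝ) (D : Set (E × ℝ)) : Prop where
  continuousOn : ContinuousOn u D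
  nonneg : ∀ z ∈ D, 0 ≤ u z
  regular : ∀ z ∈ parabolicInterior D, HeatRegularAt u z
  heatOp_le : ∀ z ∈ parabolicInterior D, heatOp u z ≤ lam z * u z

lemma IsNonnegSupersolutionOn.mono {lam lam' : E × ℝ → ℝ} {D' : Set (E × ℝ)}
    (hu : IsNonnegSupersolutionOn lam u D) (hD : D' ⊆ D) (hlam : ∀ z ∈ D', lam z ≤ lam' z) :
    IsNonnegSupersolutionOn lam' u D' where
  continuousOn := hu.continuousOn.mono hD
  nonneg z hz := hu.nonneg z (hD hz)
  regular z hz := hu.regular z (parabolicInterior_mono hD hz)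
  heatOp_le z hz := by
    have hzD' : z ∈ D' := parabolicInterior_subset hz
    exact (hu.heatOp_le z (parabolicInterior_mono hD hz)).trans
      (mul_le_mul_of_nonneg_right (hlam z hzD') (hu.nonneg z (hD hzD')))

end HeatOperator

section Barrier

variable {E : Type*} [NormedAddCommGroup E] {y : E} {s t δ c ε K M R : ℝ}

/-- The height `δ² + c (t - s) - ‖x - y‖²` above the paraboloid; it is positive on a ball about `y`
whose radius is `δ` at time `s` and then grows. -/
def paraboloidHeight (y : E) (s δ c : ℝ) (z : E × ℝ) : ℝ :=
  δ ^ 2 + c * (z.2 - s) - ‖z.1 - y‖ ^ 2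

/-- The part of the solid paraboloid `0 ≤ paraboloidHeight y s δ c` between the times `s` and `t`;
the barrier is compared with a solution on this set. -/
def paraboloidRegion (y : E) (s t δ c : ℝ) : Set (E × ℝ) :=
  {z | z.2 ∈ Icc s t ∧ 0 ≤ paraboloidHeight y s δ c z}

/-- The barrier `ε exp (-K (t - s)) h²`, with `h = paraboloidHeight y s δ c`. -/
def barrier (y : E) (s δ c ε K : ℝ) (z : E × ℝ) : ℝ :=
  ε * Real.exp (-K * (z.2 - s)) * paraboloidHeight y s δ c z ^ 2

lemma continuous_paraboloidHeight : Continuous (paraboloidHeight y s δ c) := by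
  unfold paraboloidHeight
  fun_prop

lemma continuous_barrier : Continuous (barrier y s δ c ε K) := by
  unfold barrier
  exact Continuous.mul (by fun_prop) (continuous_paraboloidHeight.pow 2)

lemma paraboloidRegion_subset_cylinder (hc : 0 ≤ c) (hR : 0 ≤ R)
    (hδR : δ ^ 2 + c * (t - s) ≤ R ^ 2) :
    paraboloidRegion y s t δ c ⊆ closedBall y R ×ˢ Icc s t := by
  rintro ⟨x, τ⟩ ⟨hτ, hx⟩
  have hgrowth : c * (τ - s) ≤ c * (t - s) := by gcongr; exact hτ.2
  refine ⟨mem_closedBall_iff_norm.2 (le_of_sq_le_sq ?_ hR), hτ⟩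
  simp only [paraboloidHeight] at hx
  linarith

lemma isClosed_paraboloidRegion : IsClosed (paraboloidRegion y s t δ c) :=
  (isClosed_Icc.preimage continuous_snd).inter
    (isClosed_le continuous_const continuous_paraboloidHeight)

lemma mem_parabolicInterior_paraboloidRegion {z : E × ℝ} (hz : z.2 ∈ Ioc s t)
    (hpos : 0 < paraboloidHeight y s δ c z) :
    z ∈ parabolicInterior (paraboloidRegion y s t δ c) := by
  have hnear : ∀ᶠ w in 𝓝 z, 0 < paraboloidHeight y s δ c w :=
    continuous_paraboloidHeight.continuousAt.eventually_const_lt hpos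
  constructor
  · have hslice : Tendsto (fun x ↦ (x, z.2)) (𝓝 z.1) (𝓝 z) :=
      Continuous.tendsto' (by fun_prop) _ _ rfl
    filter_upwards [hslice.eventually hnear] with x hx using ⟨Ioc_subset_Icc_self hz, hx.le⟩
  · have hslice : Tendsto (fun τ ↦ (z.1, τ)) (𝓝[≤] z.2) (𝓝 z) :=
      (Continuous.tendsto' (by fun_prop) _ _ rfl).mono_left nhdsWithin_le_nhds
    filter_upwards [hslice.eventually hnear, Ioc_mem_nhdsLE hz.1] with τ hpos hτ
    exact ⟨⟨hτ.1.le, hτ.2.trans hz.2⟩, hpos.le⟩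

lemma barrier_initial_le {x : E} (hε : 0 ≤ ε) (hx : 0 ≤ paraboloidHeight y s δ c (x, s)) :
    barrier y s δ c ε K (x, s) ≤ ε * δ ^ 4 := by
  have hle : paraboloidHeight y s δ c (x, s) ≤ δ ^ 2 := by simp [paraboloidHeight]
  calc barrier y s δ c ε K (x, s) = ε * paraboloidHeight y s δ c (x, s) ^ 2 := by simp [barrier]
    _ ≤ ε * (δ ^ 2) ^ 2 := by gcongr
    _ = ε * δ ^ 4 := by ring

lemma sub_mul_add_sq_div_pos {a : ℝ} (ha : 0 < a) (b h : ℝ) :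
    0 < a - b * h + b ^ 2 / (2 * a) * h ^ 2 := by
  have hsquares : a - b * h + b ^ 2 / (2 * a) * h ^ 2 = ((b * h - a) ^ 2 + a ^ 2) / (2 * a) := by
    field_simp
    ring
  rw [hsquares]
  positivity

lemma hasDerivAt_barrier_time (z : E × ℝ) :
    HasDerivAt (fun t ↦ barrier y s δ c ε K (z.1, t))
      (ε * Real.exp (-K * (z.2 - s)) *
        (2 * c * paraboloidHeight y s δ c z - K * paraboloidHeight y s δ c z ^ 2)) z.2 := by
  have hshift : HasDerivAt (fun t ↦ t - s) 1 z.2 := (hasDerivAt_id _).sub_const s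
  have hexp := (hshift.const_mul (-K)).exp.const_mul ε
  have hheight : HasDerivAt (fun t ↦ paraboloidHeight y s δ c (z.1, t)) (c * 1) z.2 :=
    ((hshift.const_mul c).const_add (δ ^ 2)).sub_const (‖z.1 - y‖ ^ 2)
  exact (hexp.mul (hheight.pow 2)).congr_deriv (by simp; ring)

variable [InnerProductSpace ℝ E]

lemma contDiff_paraboloidHeight_sq (t : ℝ) :
    ContDiff ℝ 2 fun x ↦ paraboloidHeight y s δ c (x, t) ^ 2 := by
  have hnorm : ContDiff ℝ 2 fun x : E ↦ ‖x - y‖ ^ 2 := (contDiff_id.sub contDiff_const).norm_sq ℝ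
  simp only [paraboloidHeight]
  exact (contDiff_const.sub hnorm).pow 2

lemma heatRegularAt_barrier (z : E × ℝ) : HeatRegularAt (barrier y s δ c ε K) z := by
  have hspace : ContDiff ℝ 2 fun x ↦ barrier y s δ c ε K (x, z.2) := by
    simp only [barrier]
    exact contDiff_const.mul (contDiff_paraboloidHeight_sq z.2)
  exact ⟨twiceDifferentiableAt_of_contDiffAt hspace.contDiffAt,
    (hasDerivAt_barrier_time z).differentiableAt⟩

variable [FiniteDimensional ℝ E]

lemma laplacian_barrier_space (z : E × ℝ) :
    Δ (fun x ↦ barrier y s δ c ε K (x, z.2)) z.1 =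
      ε * Real.exp (-K * (z.2 - s)) *
        (8 * ‖z.1 - y‖ ^ 2 - 4 * Module.finrank ℝ E * paraboloidHeight y s δ c z) := by
  have hscale : (fun x ↦ barrier y s δ c ε K (x, z.2)) =
      (ε * Real.exp (-K * (z.2 - s))) • fun x ↦ paraboloidHeight y s δ c (x, z.2) ^ 2 := rfl
  rw [hscale, InnerProductSpace.laplacian_smul _ (contDiff_paraboloidHeight_sq z.2).contDiffAt]
  simp only [paraboloidHeight, laplacian_sub_norm_sq_sq, smul_eq_mul]

lemma heatOp_barrier (z : E × ℝ) :
    heatOp (barrier y s δ c ε K) z = ε * Real.exp (-K * (z.2 - s)) *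
      (8 * (δ ^ 2 + c * (z.2 - s)) -
        (8 + 4 * Module.finrank ℝ E + 2 * c) * paraboloidHeight y s δ c z +
        K * paraboloidHeight y s δ c z ^ 2) := by
  rw [heatOp, laplacian_barrier_space, (hasDerivAt_barrier_time z).deriv, paraboloidHeight]
  ring

lemma exists_mul_barrier_lt_heatOp_barrier (y : E) (s : ℝ) (hδ : 0 < δ) (hc : 0 ≤ c) (hε : 0 < ε)
    (M : ℝ) : ∃ K, ∀ z : E × ℝ, s ≤ z.2 →
      M * barrier y s δ c ε K z < heatOp (barrier y s δ c ε K) z := by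
  set b : ℝ := 8 + 4 * Module.finrank ℝ E + 2 * c
  refine ⟨M + b ^ 2 / (2 * (8 * δ ^ 2)), fun z hz ↦ ?_⟩
  have hquad := sub_mul_add_sq_div_pos (a := 8 * δ ^ 2) (by positivity) b
    (paraboloidHeight y s δ c z)
  have hgrowth : 0 ≤ c * (z.2 - s) := mul_nonneg hc (sub_nonneg.2 hz)
  rw [heatOp_barrier, barrier, mul_left_comm]
  gcongr
  linarith

lemma barrier_le_of_isNonnegSupersolutionOn {u : E × ℝ → ℝ} (hM : 0 ≤ M) (hε : 0 ≤ ε)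
    (hD : IsCompact (paraboloidRegion y s t δ c))
    (hu : IsNonnegSupersolutionOn (fun _ ↦ M) u (paraboloidRegion y s t δ c))
    (hinit : ∀ x, 0 ≤ paraboloidHeight y s δ c (x, s) → ε * δ ^ 4 ≤ u (x, s))
    (hsub : ∀ z : E × ℝ, s ≤ z.2 → M * barrier y s δ c ε K z < heatOp (barrier y s δ c ε K) z) :
    ∀ z ∈ paraboloidRegion y s t δ c, barrier y s δ c ε K z ≤ u z := by
  have hinterior : ∀ z ∈ paraboloidRegion y s t δ c, (u - barrier y s δ c ε K) z < 0 →
      z ∈ parabolicInterior (paraboloidRegion y s t δ c) := by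
    rintro ⟨x, τ⟩ hz hlt
    rw [Pi.sub_apply, sub_neg] at hlt
    refine mem_parabolicInterior_paraboloidRegion ⟨hz.1.1.lt_of_ne ?_, hz.1.2⟩
      (hz.2.lt_of_ne' fun hzero ↦ ?_)
    · rintro rfl
      exact hlt.not_ge ((barrier_initial_le hε hz.2).trans (hinit x hz.2))
    · exact hlt.not_ge (by simpa [barrier, hzero] using hu.nonneg _ hz)
  have hdiff := nonneg_of_heatOp_neg_of_neg hD
    (hu.continuousOn.sub continuous_barrier.continuousOn) hinterior
    (fun z hz hlt ↦ (hu.regular z (hinterior z hz hlt)).space.sub (heatRegularAt_barrier z).space)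
    (fun z hz hlt ↦ by
      have hzi := hinterior z hz hlt
      calc heatOp (u - barrier y s δ c ε K) z
          = heatOp u z - heatOp (barrier y s δ c ε K) z :=
            heatOp_sub (hu.regular z hzi) (heatRegularAt_barrier z)
        _ < M * u z - M * barrier y s δ c ε K z := by
            linarith [hu.heatOp_le z hzi, hsub z hz.1.1]
        _ = M * (u - barrier y s δ c ε K) z := by rw [Pi.sub_apply, mul_sub]
        _ ≤ 0 := mul_nonpos_of_nonneg_of_nonpos hM hlt.le)
  exact fun z hz ↦ sub_nonneg.1 (hdiff z hz)

end Barrier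

section Propagation

variable {E : Type*} [NormedAddCommGroup E]

lemma exists_mul_pow_four_le_on_closedBall {u : E × ℝ → ℝ} {y : E} {R s : ℝ} (hR : 0 < R)
    (hcont : ContinuousOn (fun x ↦ u (x, s)) (closedBall y R)) (hpos : 0 < u (y, s)) :
    ∃ δ ∈ Ioo 0 R, ∃ ε > 0, ∀ x ∈ closedBall y δ, ε * δ ^ 4 ≤ u (x, s) := by
  have hnear : ∀ᶠ x in 𝓝 y, u (y, s) / 2 < u (x, s) :=
    (hcont.continuousAt (closedBall_mem_nhds y hR)).eventually_const_lt (half_lt_self hpos)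
  obtain ⟨r, hr, hball⟩ := nhds_basis_closedBall.eventually_iff.1 hnear
  have hδ : 0 < min r (R / 2) := lt_min hr (half_pos hR)
  refine ⟨min r (R / 2), ⟨hδ, (min_le_right _ _).trans_lt (half_lt_self hR)⟩,
    u (y, s) / 2 / min r (R / 2) ^ 4, by positivity, fun x hx ↦ ?_⟩
  rw [div_mul_cancel₀ _ (by positivity)]
  exact (hball (closedBall_subset_closedBall (min_le_left _ _) hx)).le

variable [InnerProductSpace ℝ E] [FiniteDimensional ℝ E] {u : E × ℝ → ℝ}

lemma pos_on_ball_of_pos_at_center {y : E} {R s t M : ℝ} (hR : 0 < R) (hst : s < t) (hM : 0 ≤ M)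
    (hu : IsNonnegSupersolutionOn (fun _ ↦ M) u (closedBall y R ×ˢ Icc s t))
    (hpos : 0 < u (y, s)) : ∀ x ∈ ball y R, 0 < u (x, t) := by
  obtain ⟨δ, ⟨hδ, hδR⟩, ε, hε, hbase⟩ := exists_mul_pow_four_le_on_closedBall hR
    (hu.continuousOn.comp (by fun_prop) fun x hx ↦ ⟨hx, left_mem_Icc.2 hst.le⟩) hpos
  -- The paraboloid fills the whole ball of radius `R` exactly at time `t`.
  obtain ⟨c, hc, hct⟩ : ∃ c ≥ 0, δ ^ 2 + c * (t - s) = R ^ 2 := by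
    have hts : 0 < t - s := sub_pos.2 hst
    refine ⟨(R ^ 2 - δ ^ 2) / (t - s), div_nonneg (sub_nonneg.2 (by gcongr)) hts.le, ?_⟩
    rw [div_mul_cancel₀ _ hts.ne', add_sub_cancel]
  obtain ⟨K, hK⟩ := exists_mul_barrier_lt_heatOp_barrier y s hδ hc hε M
  have hsubset : paraboloidRegion y s t δ c ⊆ closedBall y R ×ˢ Icc s t :=
    paraboloidRegion_subset_cylinder hc hR.le hct.le
  have hcompare := barrier_le_of_isNonnegSupersolutionOn hM hε.le
    (((isCompact_closedBall y R).prod isCompact_Icc).of_isClosed_subset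
      isClosed_paraboloidRegion hsubset)
    (hu.mono hsubset fun _ _ ↦ le_rfl)
    (fun x hx ↦ hbase x <| mem_closedBall_iff_norm.2 <|
      le_of_sq_le_sq (by simpa [paraboloidHeight] using hx) hδ.le) hK
  intro x hx
  have hheight : 0 < paraboloidHeight y s δ c (x, t) := by
    rw [paraboloidHeight, hct, sub_pos]
    gcongr
    exact mem_ball_iff_norm.1 hx
  calc 0 < barrier y s δ c ε K (x, t) := by unfold barrier; positivity
    _ ≤ u (x, t) := hcompare _ ⟨right_mem_Icc.2 hst.le, hheight.le⟩

variable {Ω : Set E} {a b : ℝ} {lam : E × ℝ → ℝ}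

lemma pos_on_ball_of_closedBall_subset (hu : IsNonnegSupersolutionOn lam u (Ω ×ˢ Ioo a b))
    (hlam : ∀ K ⊆ Ω ×ˢ Ioo a b, IsCompact K → BddAbove (lam '' K))
    {y : E} {R s t : ℝ} (hR : 0 < R) (hball : closedBall y R ⊆ Ω) (has : a < s) (hst : s < t)
    (htb : t < b) (hpos : 0 < u (y, s)) : ∀ x ∈ ball y R, 0 < u (x, t) := by
  have hsubset : closedBall y R ×ˢ Icc s t ⊆ Ω ×ˢ Ioo a b :=
    prod_mono hball (Icc_subset_Ioo has htb)
  obtain ⟨M, hM⟩ := hlam _ hsubset ((isCompact_closedBall y R).prod isCompact_Icc)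
  have hlamM : ∀ z ∈ closedBall y R ×ˢ Icc s t, lam z ≤ |M| :=
    fun z hz ↦ (hM (mem_image_of_mem lam hz)).trans (le_abs_self M)
  exact pos_on_ball_of_pos_at_center hR hst (abs_nonneg M) (hu.mono hsubset hlamM) hpos

lemma pos_of_pos_at_earlier_time (hΩo : IsOpen Ω) (hΩ : IsPreconnected Ω)
    (hu : IsNonnegSupersolutionOn lam u (Ω ×ˢ Ioo a b))
    (hlam : ∀ K ⊆ Ω ×ˢ Ioo a b, IsCompact K → BddAbove (lam '' K))
    {x y : E} (hx : x ∈ Ω) (hy : y ∈ Ω) {s t : ℝ} (has : a < s) (hst : s < t) (htb : t < b)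
    (hpos : 0 < u (x, s)) : 0 < u (y, t) := by
  let Propagates (x y : E) : Prop := ∀ s t, a < s → s < t → t < b → 0 < u (x, s) → 0 < u (y, t)
  have hnear : ∀ x ∈ Ω, ∀ᶠ y in 𝓝[Ω] x, Propagates x y ∧ Propagates y x := by
    intro x hx
    obtain ⟨r, hr, hball⟩ := nhds_basis_closedBall.mem_iff.1 (hΩo.mem_nhds hx)
    have hspread {y z : E} (hy : y ∈ closedBall x (r / 2)) (hz : z ∈ ball y (r / 2)) :
        Propagates y z := fun s t has hst htb hpos ↦
      pos_on_ball_of_closedBall_subset hu hlam (half_pos hr)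
        ((closedBall_subset_closedBall' (by rw [mem_closedBall] at hy; linarith)).trans hball)
        has hst htb hpos z hz
    filter_upwards [nhdsWithin_le_nhds (ball_mem_nhds x (half_pos hr))] with y hy
    exact ⟨hspread (mem_closedBall_self (half_pos hr).le) hy,
      hspread (ball_subset_closedBall hy) (mem_ball_comm.1 hy)⟩
  have htrans (x y z : E) (hxy : Propagates x y) (hyz : Propagates y z) : Propagates x z := by
    intro s t has hst htb hpos
    obtain ⟨τ, hsτ, hτt⟩ := exists_between hst
    exact hyz τ t (has.trans hsτ) hτt htb (hxy s τ has hsτ (hτt.trans htb) hpos)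
  exact hΩ.induction₂' Propagates hnear (fun x y z _ _ _ ↦ htrans x y z) hx hy s t has hst htb hpos

theorem strong_maximum_principle_heat_general (hΩo : IsOpen Ω) (hΩ : IsPreconnected Ω)
    (hlam : ∀ K ⊆ Ω ×ˢ Ioo a b, IsCompact K → BddAbove (lam '' K))
    (hcont : ContinuousOn u (Ω ×ˢ Ioo a b)) (hnonneg : ∀ z ∈ Ω ×ˢ Ioo a b, 0 ≤ u z)
    (hreg : ∀ z ∈ Ω ×ˢ Ioo a b, HeatRegularAt u z)
    (hsuper : ∀ z ∈ Ω ×ˢ Ioo a b, heatOp u z ≤ lam z * u z)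
    {x₀ : E} {t₀ : ℝ} (hx₀ : x₀ ∈ Ω) (ht₀ : t₀ < b) (hzero : u (x₀, t₀) = 0) :
    ∀ x ∈ Ω, ∀ t ∈ Ioc a t₀, u (x, t) = 0 := by
  intro x hx t ht
  have hxt : (x, t) ∈ Ω ×ˢ Ioo a b := ⟨hx, ht.1, ht.2.trans_lt ht₀⟩
  by_contra hne
  have hpos : 0 < u (x, t) := (hnonneg _ hxt).lt_of_ne' hne
  obtain ⟨s, hpos_s, has, hst⟩ : ∃ s, 0 < u (x, s) ∧ s ∈ Ioo a t :=
    (((hreg _ hxt).time.continuousAt.eventually_const_lt hpos).filter_mono nhdsWithin_le_nhds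
      |>.and (Ioo_mem_nhdsLT ht.1)).exists
  have hu : IsNonnegSupersolutionOn lam u (Ω ×ˢ Ioo a b) :=
    ⟨hcont, hnonneg, fun z hz ↦ hreg z (parabolicInterior_subset hz),
      fun z hz ↦ hsuper z (parabolicInterior_subset hz)⟩
  exact hzero.not_gt <| pos_of_pos_at_earlier_time hΩo hΩ hu hlam hx hx₀ has (hst.trans_le ht.2)
    ht₀ hpos_s

end Propagation

/-- **Theorem 3.4 (Strong maximum principle, critical case, heat-operator version).** -/
theorem strong_maximum_principle_heat
    (N : ℕ) (hN : 1 ≤ N) (m M : ℝ) (hm : 0 < m) (hmM : m ≤ M)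
    (Ω : Set (Euc N)) (hΩo : IsOpen Ω) (hΩconn : IsConnected Ω)
    (T : ℝ) (hT : 0 < T)
    (lam u : Euc N × ℝ → ℝ)
    (hlam : ∀ z ∈ Ω ×ˢ Ioo (0 : ℝ) T, m ≤ lam z ∧ lam z ≤ M)
    (hcont : ContinuousOn u (Ω ×ˢ Ioo (0 : ℝ) T))
    (hnn : ∀ z ∈ Ω ×ˢ Ioo (0 : ℝ) T, 0 ≤ u z)
    (hpde : ∀ z ∈ Ω ×ˢ Ioo (0 : ℝ) T,
      DifferentiableAt ℝ (fun y => u (y, z.2)) z.1 ∧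
      DifferentiableAt ℝ (fun y : Euc N => gradient (fun y' => u (y', z.2)) y) z.1 ∧
      DifferentiableAt ℝ (fun t => u (z.1, t)) z.2 ∧
      LinearMap.trace ℝ (Euc N)
          (fderiv ℝ (fun y : Euc N => gradient (fun y' => u (y', z.2)) y) z.1).toLinearMap
        - deriv (fun t => u (z.1, t)) z.2 = lam z * u z)
    (x0 : Euc N) (t0 : ℝ) (hx0 : x0 ∈ Ω) (ht0 : t0 ∈ Ioo (0 : ℝ) T)
    (hzero : u (x0, t0) = 0) :
    ∀ x ∈ Ω, ∀ t ∈ Ioc (0 : ℝ) t0, u (x, t) = 0 := by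
  have hbdd : ∀ K ⊆ Ω ×ˢ Ioo (0 : ℝ) T, IsCompact K → BddAbove (lam '' K) :=
    fun K hK _ ↦ ⟨M, forall_mem_image.2 fun z hz ↦ (hlam z (hK hz)).2⟩
  have hreg : ∀ z ∈ Ω ×ˢ Ioo (0 : ℝ) T, HeatRegularAt u z := fun z hz ↦
    { space := ⟨(hΩo.eventually_mem hz.1).mono fun x hx ↦ (hpde (x, z.2) ⟨hx, hz.2⟩).1,
        differentiableAt_fderiv_of_gradient (hpde z hz).2.1⟩
      time := (hpde z hz).2.2.1 }
  have heq : ∀ z ∈ Ω ×ˢ Ioo (0 : ℝ) T, heatOp u z = lam z * u z := fun z hz ↦ by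
    rw [← (hpde z hz).2.2.2, heatOp, ← trace_fderiv_gradient]
  exact strong_maximum_principle_heat_general hΩo hΩconn.isPreconnected hbdd hcont hnn hreg
    (fun z hz ↦ (heq z hz).le) hx0 ht0.2 hzero
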